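/- Let N, M be positive integers and let I_n^t, V_n^t (n, t ∈ ℤ) be complex numbers, N-periodic in n. Then for each t ∈ ℤ there exist diagonal N×N complex matrices γ_{−1}, γ_0, γ_1, …, γ_{M−1} (depending on the I's and V's but not on y) such that for every nonzero y ∈ ℂ, X_t(y) = γ_{−1}·S(y)^{−1} + γ_0 + γ_1·S(y) + ⋯ + γ_{M−1}·S(y)^{M−1} + S(y)^M. (Note that S(y) is invertible for y ≠ 0, since S(y)^N = y·E.) -/

import Mathlib

/-!
The product is expanded by moving every diagonal matrix to the left. With `σ` the cyclic shift of
the indices, `S(y)` satisfies `S(y) · diag(d) = diag(d ∘ σ) · S(y)`, hence also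
`S(y)⁻¹ · diag(d) = diag(d ∘ σ⁻¹) · S(y)⁻¹`, and neither rule involves `y`. Since
`R_t(y) = diag(I^t) + S(y)` and `L_t(y) = E + diag(v) · S(y)⁻¹`, an induction on the number of
factors writes `R_{t+k-1}(y) ⋯ R_t(y)` as a polynomial of degree `k` in `S(y)` with `y`-independent
diagonal coefficients on the left and leading coefficient `E` (`Rprod_expansion`). Multiplying by
`L_t(y)` on the left adds a second such sum, with transformed diagonal coefficients and all degrees
lowered by one.
-/

open Matrix Finset Filter

/-- The matrix `L_t(y)`: `(n,n)`-entry `1`, `(n+1,n)`-entry `V_n^t` for `n = 1,…,N-1`,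
`(1,N)`-entry `V_N^t / y` (indices written 1-based; here realized 0-based on `Fin N`). -/
noncomputable def Ltoda (N : ℕ) (V : ℤ → ℤ → ℂ) (t : ℤ) (y : ℂ) :
    Matrix (Fin N) (Fin N) ℂ := fun i j =>
  (if i = j then 1 else 0) +
  (if (i : ℕ) = (j : ℕ) + 1 then V ((j : ℕ) + 1) t else 0) +
  (if (i : ℕ) = 0 ∧ (j : ℕ) = N - 1 then V N t / y else 0)

/-- The matrix `R_t(y)`: `(n,n)`-entry `I_n^t`, `(n,n+1)`-entry `1` for `n = 1,…,N-1`,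
`(N,1)`-entry `y`. -/
noncomputable def Rtoda (N : ℕ) (I : ℤ → ℤ → ℂ) (t : ℤ) (y : ℂ) :
    Matrix (Fin N) (Fin N) ℂ := fun i j =>
  (if i = j then I ((i : ℕ) + 1) t else 0) +
  (if (j : ℕ) = (i : ℕ) + 1 then 1 else 0) +
  (if (i : ℕ) = N - 1 ∧ (j : ℕ) = 0 then y else 0)

/-- The shift matrix `S(y)`: `(n,n+1)`-entry `1` for `n = 1,…,N-1`, `(N,1)`-entry `y`. -/
def Stoda (N : ℕ) (y : ℂ) : Matrix (Fin N) (Fin N) ℂ := fun i j =>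
  (if (j : ℕ) = (i : ℕ) + 1 then 1 else 0) +
  (if (i : ℕ) = N - 1 ∧ (j : ℕ) = 0 then y else 0)

/-- `Rprod N I t y k = R_{t+k-1}(y) ⋯ R_{t+1}(y) · R_t(y)`. -/
noncomputable def Rprod (N : ℕ) (I : ℤ → ℤ → ℂ) (t : ℤ) (y : ℂ) :
    ℕ → Matrix (Fin N) (Fin N) ℂ
  | 0 => 1
  | k + 1 => Rtoda N I (t + k) y * Rprod N I t y k

/-- `X_t(y) = L_t(y) · R_{t+M-1}(y) ⋯ R_{t+1}(y) · R_t(y)`. -/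
noncomputable def Xtoda (N M : ℕ) (I V : ℤ → ℤ → ℂ) (t : ℤ) (y : ℂ) :
    Matrix (Fin N) (Fin N) ℂ :=
  Ltoda N V t y * Rprod N I t y M

/-- `(I, V)` is a solution of the hungry periodic discrete Toda equation `Toda_{N,M}`. -/
def IsToda (N M : ℕ) (I V : ℤ → ℤ → ℂ) : Prop :=
  ∀ n t : ℤ,
    I n (t + M) = I n t + V n t - V (n - 1) (t + 1) ∧
    V n (t + 1) * I n (t + M) = I (n + 1) t * V n t ∧
    I (n + N) t = I n t ∧ V (n + N) t = V n t

theorem finRotate_eq_iff (n : ℕ) (i j : Fin (n + 1)) :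
    finRotate (n + 1) i = j ↔
      ((j : ℕ) = i + 1 ∨ ((i : ℕ) = n ∧ (j : ℕ) = 0)) := by
  rw [finRotate_apply, Fin.ext_iff, Fin.val_add_one]
  have hi := i.isLt
  have hj := j.isLt
  split_ifs with h
  · have : (i : ℕ) = n := by simp [h]
    omega
  · have : (i : ℕ) ≠ n := fun h' => h (Fin.ext h')
    omega

/-- `S(y)` is a weighted permutation matrix, supported on the graph of the cyclic shift. -/
theorem Stoda_apply (n : ℕ) (y : ℂ) (i j : Fin (n + 1)) :
    Stoda (n + 1) y i j =
      if finRotate (n + 1) i = j then (if (i : ℕ) = n then y else 1) else 0 := by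
  have hi := i.isLt
  have hj := j.isLt
  simp only [Stoda, finRotate_eq_iff, Nat.add_sub_cancel]
  by_cases h : (i : ℕ) = n
  · have : (j : ℕ) ≠ i + 1 := by omega
    have : (j : ℕ) ≠ n + 1 := by omega
    simp [h, this]
  · simp [h]

/-- The candidate for `S(y)⁻¹`: the cyclic subdiagonal matrix with weights inverse to those
of `S(y)`. -/
noncomputable def StodaInv (n : ℕ) (y : ℂ) : Matrix (Fin (n + 1)) (Fin (n + 1)) ℂ := fun i j =>
  if finRotate (n + 1) j = i then (if (j : ℕ) = n then y⁻¹ else 1) else 0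

theorem Stoda_mul_StodaInv (n : ℕ) (y : ℂ) (hy : y ≠ 0) :
    Stoda (n + 1) y * StodaInv n y = 1 := by
  ext i j
  simp only [Matrix.mul_apply, Stoda_apply, StodaInv, ite_mul, zero_mul, Finset.sum_ite_eq,
    Finset.mem_univ, if_true, Matrix.one_apply, EmbeddingLike.apply_eq_iff_eq]
  by_cases h : i = j
  · subst h
    by_cases h' : (i : ℕ) = n <;> simp [h', hy]
  · simp [h, Ne.symm h]

theorem Stoda_mul_diagonal (n : ℕ) (y : ℂ) (d : Fin (n + 1) → ℂ) :
    Stoda (n + 1) y * diagonal d =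
      diagonal (fun i => d (finRotate (n + 1) i)) * Stoda (n + 1) y := by
  ext i j
  rw [Matrix.mul_diagonal, Matrix.diagonal_mul, Stoda_apply]
  by_cases h : finRotate (n + 1) i = j
  · rw [h, mul_comm]
  · rw [if_neg h, zero_mul, mul_zero]

theorem Stoda_inv (n : ℕ) (y : ℂ) (hy : y ≠ 0) :
    (Stoda (n + 1) y)⁻¹ = StodaInv n y :=
  Matrix.inv_eq_right_inv (Stoda_mul_StodaInv n y hy)

theorem Stoda_inv_mul_diagonal (n : ℕ) (y : ℂ) (hy : y ≠ 0) (d : Fin (n + 1) → ℂ) :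
    (Stoda (n + 1) y)⁻¹ * diagonal d =
      diagonal (fun i => d ((finRotate (n + 1)).symm i)) * (Stoda (n + 1) y)⁻¹ := by
  have h1 : Stoda (n + 1) y * (Stoda (n + 1) y)⁻¹ = 1 := by
    rw [Stoda_inv n y hy, Stoda_mul_StodaInv n y hy]
  have h2 : (Stoda (n + 1) y)⁻¹ * Stoda (n + 1) y = 1 := mul_eq_one_comm.mp h1
  have h3 := Stoda_mul_diagonal n y (fun i => d ((finRotate (n + 1)).symm i))
  simp only [Equiv.symm_apply_apply] at h3
  calc (Stoda (n + 1) y)⁻¹ * diagonal d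
      = (Stoda (n + 1) y)⁻¹ * (diagonal d * Stoda (n + 1) y) * (Stoda (n + 1) y)⁻¹ := by
        rw [Matrix.mul_assoc, Matrix.mul_assoc, h1, Matrix.mul_one]
    _ = _ := by rw [← h3, ← Matrix.mul_assoc, h2, Matrix.one_mul]

theorem Rtoda_eq (N : ℕ) (I : ℤ → ℤ → ℂ) (t : ℤ) (y : ℂ) :
    Rtoda N I t y = diagonal (fun i : Fin N => I ((i : ℕ) + 1) t) + Stoda N y := by
  ext i j
  simp only [Rtoda, Stoda, Matrix.add_apply, Matrix.diagonal_apply]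
  ring

/-- The first row of `L_t(y)` carries `V_N^t`, which is where the case distinction comes from. -/
theorem Ltoda_eq (n : ℕ) (V : ℤ → ℤ → ℂ) (t : ℤ) (y : ℂ) (hy : y ≠ 0) :
    Ltoda (n + 1) V t y =
      1 + diagonal (fun i : Fin (n + 1) => if (i : ℕ) = 0 then V ((n + 1 : ℕ) : ℤ) t
        else V ((i : ℕ) : ℤ) t) * (Stoda (n + 1) y)⁻¹ := by
  rw [Stoda_inv n y hy]
  ext i j
  have hi := i.isLt
  have hj := j.isLt
  simp only [Ltoda, StodaInv, Matrix.add_apply, Matrix.diagonal_mul, Matrix.one_apply,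
    finRotate_eq_iff, Nat.add_sub_cancel, add_assoc]
  congr 1
  by_cases h0 : (i : ℕ) = 0
  · by_cases h : (j : ℕ) = n
    · simp [h0, h, div_eq_mul_inv]
    · simp [h0, h]
  · by_cases h : (i : ℕ) = (j : ℕ) + 1
    · have h' : (j : ℕ) ≠ n := by omega
      simp [h, h']
    · simp [h0, h]

/-- `R_{t+k-1}(y) ⋯ R_t(y)` is monic of degree `k` in `S(y)`, with diagonal coefficients `c i`
chosen uniformly in `y`. -/
theorem Rprod_expansion (n : ℕ) (I : ℤ → ℤ → ℂ) (t : ℤ) (k : ℕ) :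
    ∃ c : ℕ → Fin (n + 1) → ℂ, c k = 1 ∧ (∀ i, k < i → c i = 0) ∧
      ∀ y : ℂ, Rprod (n + 1) I t y k =
        ∑ i ∈ Finset.range (k + 1), diagonal (c i) * Stoda (n + 1) y ^ i := by
  induction k with
  | zero =>
    refine ⟨fun i => if i = 0 then 1 else 0, by simp, fun i hi => by simp [hi.ne'], fun y => ?_⟩
    simp [Rprod]
  | succ k ih =>
    obtain ⟨c, hc1, hc0, hc⟩ := ih
    let d : Fin (n + 1) → ℂ := fun i => I ((i : ℕ) + 1) (t + k)
    -- `(diag d + S) ∑ c_i S^i` has `i`-th coefficient `d c_i + c_{i-1} ∘ σ`.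
    let e : ℕ → Fin (n + 1) → ℂ := fun i =>
      match i with
      | 0 => 0
      | i + 1 => fun j => c i (finRotate (n + 1) j)
    refine ⟨fun i => d * c i + e i, ?_, ?_, fun y => ?_⟩
    · funext j
      simp [e, hc0 (k + 1) (Nat.lt_succ_self k), hc1]
    · intro i hi
      obtain ⟨i, rfl⟩ : ∃ m, i = m + 1 := ⟨i - 1, by omega⟩
      funext j
      simp [e, hc0 (i + 1) (by omega), hc0 i (by omega)]
    · have hsplit : ∀ i, diagonal (d * c i + e i) =
          diagonal d * diagonal (c i) + diagonal (e i) := by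
        intro i
        rw [Matrix.diagonal_mul_diagonal, Matrix.diagonal_add]
        rfl
      have hL : ∑ i ∈ Finset.range (k + 1 + 1),
          diagonal d * diagonal (c i) * Stoda (n + 1) y ^ i =
          diagonal d * ∑ i ∈ Finset.range (k + 1), diagonal (c i) * Stoda (n + 1) y ^ i := by
        rw [Finset.sum_range_succ, hc0 (k + 1) (Nat.lt_succ_self k), Finset.mul_sum]
        have h0 : diagonal (0 : Fin (n + 1) → ℂ) = 0 := Matrix.diagonal_zero
        simp only [h0, Matrix.mul_assoc, Matrix.mul_zero, Matrix.zero_mul, add_zero]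
      have hS : ∑ i ∈ Finset.range (k + 1 + 1), diagonal (e i) * Stoda (n + 1) y ^ i =
          Stoda (n + 1) y *
            ∑ i ∈ Finset.range (k + 1), diagonal (c i) * Stoda (n + 1) y ^ i := by
        rw [Finset.sum_range_succ', Finset.mul_sum]
        have h0 : diagonal (e 0) = (0 : Matrix (Fin (n + 1)) (Fin (n + 1)) ℂ) :=
          Matrix.diagonal_zero
        rw [h0, Matrix.zero_mul, add_zero]
        refine Finset.sum_congr rfl fun i _ => ?_
        rw [← Matrix.mul_assoc, Stoda_mul_diagonal, Matrix.mul_assoc, ← pow_succ']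
      simp only [hsplit, Matrix.add_mul, Finset.sum_add_distrib]
      rw [hL, hS, Rprod, Rtoda_eq, hc y, Matrix.add_mul]

/-- `X_t(y) = γ₋₁ S(y)⁻¹ + γ₀ + γ₁ S(y) + ⋯ + γ_{M-1} S(y)^{M-1} + S(y)^M`
for diagonal matrices `γ₋₁, γ₀, …, γ_{M-1}` independent of `y`.
Here `γ i` encodes `γ_{i-1}` for `i = 0, 1, …, M`. -/
theorem stmt8 (N M : ℕ) (hN : 0 < N) (hM : 0 < M) (I V : ℤ → ℤ → ℂ)
    (hIper : ∀ n t : ℤ, I (n + N) t = I n t) (hVper : ∀ n t : ℤ, V (n + N) t = V n t)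
    (t : ℤ) :
    ∃ γ : ℕ → Matrix (Fin N) (Fin N) ℂ, (∀ i, (γ i).IsDiag) ∧
      ∀ y : ℂ, y ≠ 0 →
        Xtoda N M I V t y =
          γ 0 * (Stoda N y)⁻¹ + (∑ i ∈ Finset.range M, γ (i + 1) * (Stoda N y) ^ i) +
            (Stoda N y) ^ M := by
  obtain ⟨n, rfl⟩ : ∃ n, N = n + 1 := ⟨N - 1, by omega⟩
  obtain ⟨c, hc1, -, hc⟩ := Rprod_expansion n I t M
  let v : Fin (n + 1) → ℂ := fun i =>
    if (i : ℕ) = 0 then V ((n + 1 : ℕ) : ℤ) t else V ((i : ℕ) : ℤ) t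
  let b : ℕ → Matrix (Fin (n + 1)) (Fin (n + 1)) ℂ := fun i =>
    diagonal v * diagonal (fun j => c i ((finRotate (n + 1)).symm j))
  have hb : ∀ i, (b i).IsDiag := fun i => by
    simp only [b, Matrix.diagonal_mul_diagonal]
    exact Matrix.isDiag_diagonal _
  -- `c i` is the coefficient of `S^i` coming from `E`, and `b (i + 1)` the one coming from
  -- `diag(v) S⁻¹`.
  refine ⟨fun i => match i with
    | 0 => b 0
    | i + 1 => diagonal (c i) + b (i + 1), ?_, fun y hy => ?_⟩
  · rintro (_ | i)
    · exact hb 0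
    · exact (Matrix.isDiag_diagonal _).add (hb (i + 1))
  · have h2 : (Stoda (n + 1) y)⁻¹ * Stoda (n + 1) y = 1 := by
      rw [Stoda_inv n y hy]
      exact mul_eq_one_comm.mp (Stoda_mul_StodaInv n y hy)
    have hlow : diagonal v * (Stoda (n + 1) y)⁻¹ *
        ∑ i ∈ Finset.range (M + 1), diagonal (c i) * Stoda (n + 1) y ^ i =
        ∑ i ∈ Finset.range M, b (i + 1) * Stoda (n + 1) y ^ i + b 0 * (Stoda (n + 1) y)⁻¹ := by
      have hterm : ∀ i, diagonal v * (Stoda (n + 1) y)⁻¹ *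
          (diagonal (c i) * Stoda (n + 1) y ^ i) =
          b i * ((Stoda (n + 1) y)⁻¹ * Stoda (n + 1) y ^ i) := by
        intro i
        rw [Matrix.mul_assoc, ← Matrix.mul_assoc _ (diagonal (c i)),
          Stoda_inv_mul_diagonal n y hy]
        simp only [b, Matrix.mul_assoc]
      rw [Finset.mul_sum, Finset.sum_range_succ', hterm 0, pow_zero, Matrix.mul_one]
      congr 1
      refine Finset.sum_congr rfl fun i _ => ?_
      rw [hterm, pow_succ', ← Matrix.mul_assoc _ (Stoda (n + 1) y), h2, Matrix.one_mul]
    have htop : ∑ i ∈ Finset.range (M + 1), diagonal (c i) * Stoda (n + 1) y ^ i =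
        ∑ i ∈ Finset.range M, diagonal (c i) * Stoda (n + 1) y ^ i + Stoda (n + 1) y ^ M := by
      rw [Finset.sum_range_succ, hc1]
      have h1 : diagonal (1 : Fin (n + 1) → ℂ) = 1 := Matrix.diagonal_one
      rw [h1, Matrix.one_mul]
    rw [Xtoda, Ltoda_eq n V t y hy, hc y, Matrix.add_mul, hlow, Matrix.one_mul, htop]
    simp only [Matrix.add_mul, Finset.sum_add_distrib]
    abel
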